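/- Let m ∈ (0,1), L > 0, and let g : [0,L] → [0,1] be measurable. Set F(u) := ∫_0^u g(w) dw and let F̂ be the least concave majorant of F on [0,L]; let ĝ : [0,L] → [0,1] be a measurable function with ∫_0^u ĝ(w) dw = F̂(u) for all u ∈ [0,L]. If a measurable φ : [0,L] → [0,1] satisfies ∫_0^u φ(w) dw ≥ F(u) for all u ∈ [0,L], ∫_0^L φ(w) dw = F(L), and ∫_0^L h_m(φ(u)) du = ∫_0^L h_m(ĝ(u)) du, then φ = ĝ almost everywhere; that is, the minimizer of the variational problem is unique up to almost-everywhere equality. -/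

import Mathlib

open MeasureTheory Set

noncomputable section

/-- The least concave majorant of `F` on `[0,L]`: the pointwise infimum of all concave
functions on `[0,L]` dominating `F` there. -/
noncomputable def lcMaj (L : ℝ) (F : ℝ → ℝ) (u : ℝ) : ℝ :=
  sInf {y : ℝ | ∃ G : ℝ → ℝ,
    ConcaveOn ℝ (Set.Icc 0 L) G ∧ (∀ x ∈ Set.Icc 0 L, F x ≤ G x) ∧ y = G u}

/-- `h_m(x) = x log(x/m) + (1-x) log((1-x)/(1-m))`, with the convention `0 log 0 = 0`. -/
noncomputable def hFun (m x : ℝ) : ℝ :=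
  x * Real.log (x / m) + (1 - x) * Real.log ((1 - x) / (1 - m))

lemma aux_h_eq {m : ℝ} (hm : m ∈ Ioo (0:ℝ) 1) (x : ℝ) :
    hFun m x = -Real.binEntropy x - x * Real.log m - (1 - x) * Real.log (1 - m) := by
  have h0 : m ≠ 0 := hm.1.ne'
  have h1 : 1 - m ≠ 0 := by have := hm.2; intro h; linarith
  have e1 : x * Real.log (x / m) = x * Real.log x - x * Real.log m := by
    by_cases hx : x = 0
    · simp [hx]
    · rw [Real.log_div hx h0]; ring
  have e2 : (1 - x) * Real.log ((1 - x) / (1 - m))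
      = (1 - x) * Real.log (1 - x) - (1 - x) * Real.log (1 - m) := by
    by_cases hx : 1 - x = 0
    · simp [hx]
    · rw [Real.log_div hx h1]; ring
  rw [hFun, e1, e2, Real.binEntropy, Real.log_inv, Real.log_inv]
  ring

lemma aux_h_cont {m : ℝ} (hm : m ∈ Ioo (0:ℝ) 1) : Continuous (hFun m) := by
  have : hFun m = fun x => -Real.binEntropy x - x * Real.log m - (1 - x) * Real.log (1 - m) :=
    funext (aux_h_eq hm)
  rw [this]
  fun_prop

lemma aux_h_mid {m : ℝ} (hm : m ∈ Ioo (0:ℝ) 1) {x y : ℝ} (hx : x ∈ Icc (0:ℝ) 1)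
    (hy : y ∈ Icc (0:ℝ) 1) (hxy : x ≠ y) :
    hFun m ((x + y) / 2) < (hFun m x + hFun m y) / 2 := by
  have := Real.strictConcave_binEntropy.2 hx hy hxy (show (0:ℝ) < 1/2 by norm_num)
    (show (0:ℝ) < 1/2 by norm_num) (by norm_num)
  simp only [smul_eq_mul] at this
  rw [show (1:ℝ)/2 * x + 1/2 * y = (x + y)/2 by ring] at this
  simp only [aux_h_eq hm]
  linarith

/-- bounded measurable functions are interval integrable -/
lemma aux_ii {f : ℝ → ℝ} (hf : Measurable f) (C : ℝ) (hC : ∀ u, |f u| ≤ C) (a b : ℝ) :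
    IntervalIntegrable f volume a b := by
  rw [intervalIntegrable_iff]
  refine Measure.integrableOn_of_bounded (M := C) ?_ hf.aestronglyMeasurable ?_
  · simp
  · exact Filter.Eventually.of_forall hC

lemma aux_ii01 {f : ℝ → ℝ} (hf : Measurable f) (hC : ∀ u, f u ∈ Icc (0:ℝ) 1) (a b : ℝ) :
    IntervalIntegrable f volume a b :=
  aux_ii hf 1 (fun u => abs_le.2 ⟨by linarith [(hC u).1], (hC u).2⟩) a b

section lc
variable {L : ℝ} {F : ℝ → ℝ}

lemma aux_lc_bdd {u : ℝ} (hu : u ∈ Icc 0 L) :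
    BddBelow {y : ℝ | ∃ G : ℝ → ℝ,
    ConcaveOn ℝ (Set.Icc 0 L) G ∧ (∀ x ∈ Set.Icc 0 L, F x ≤ G x) ∧ y = G u} := by
  refine ⟨F u, ?_⟩
  rintro y ⟨G, _, h, rfl⟩
  exact h u hu

lemma aux_lc_le {u : ℝ} (hu : u ∈ Icc 0 L) {G : ℝ → ℝ} (hG : ConcaveOn ℝ (Icc 0 L) G)
    (h : ∀ x ∈ Icc 0 L, F x ≤ G x) : lcMaj L F u ≤ G u :=
  csInf_le (aux_lc_bdd hu) ⟨G, hG, h, rfl⟩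

lemma aux_lc_ge {u : ℝ} (hu : u ∈ Icc 0 L) {M : ℝ} (hM : ∀ x ∈ Icc 0 L, F x ≤ M) :
    F u ≤ lcMaj L F u := by
  refine le_csInf ⟨M, fun _ => M, concaveOn_const _ (convex_Icc _ _), hM, rfl⟩ ?_
  rintro y ⟨G, _, h, rfl⟩
  exact h u hu

lemma aux_lc_concave {M : ℝ} (hM : ∀ x ∈ Icc 0 L, F x ≤ M) :
    ConcaveOn ℝ (Icc 0 L) (lcMaj L F) := by
  refine ⟨convex_Icc _ _, ?_⟩
  intro x hx y hy a b ha hb hab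
  refine le_csInf ⟨M, fun _ => M, concaveOn_const _ (convex_Icc _ _), hM, rfl⟩ ?_
  rintro z ⟨G, hG, h, rfl⟩
  refine le_trans ?_ (hG.2 hx hy ha hb hab)
  have h1 := aux_lc_le hx hG h
  have h2 := aux_lc_le hy hG h
  simp only [smul_eq_mul]
  gcongr
end lc

/-- Concave `J` with a max at `s` increases before `s`. -/
lemma aux_conc_mono {L s : ℝ} {J : ℝ → ℝ} (hJ : ConcaveOn ℝ (Icc 0 L) J) (hs : s ∈ Icc 0 L)
    (hmax : ∀ u ∈ Icc 0 L, J u ≤ J s) : MonotoneOn J (Icc 0 s) := by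
  intro a ha b hb hab
  have ha' : a ∈ Icc 0 L := ⟨ha.1, ha.2.trans hs.2⟩
  have hseg : b ∈ segment ℝ a s := by
    rw [segment_eq_Icc (ha.2)]; exact ⟨hab, hb.2⟩
  have := hJ.ge_on_segment ha' hs hseg
  rwa [min_eq_left (hmax a ha')] at this

lemma aux_conc_anti {L s : ℝ} {J : ℝ → ℝ} (hJ : ConcaveOn ℝ (Icc 0 L) J) (hs : s ∈ Icc 0 L)
    (hmax : ∀ u ∈ Icc 0 L, J u ≤ J s) : AntitoneOn J (Icc s L) := by
  intro a ha b hb hab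
  have hb' : b ∈ Icc 0 L := ⟨hs.1.trans hb.1, hb.2⟩
  have hseg : a ∈ segment ℝ s b := by
    rw [segment_eq_Icc (hb.1)]; exact ⟨ha.1, hab⟩
  have := hJ.ge_on_segment hs hb' hseg
  rwa [min_eq_right (hmax b hb')] at this

lemma aux_pos {L : ℝ} (hL : 0 < L)
    {g : ℝ → ℝ} (hgmeas : Measurable g) (hgrange : ∀ u, g u ∈ Set.Icc (0:ℝ) 1)
    {ghat : ℝ → ℝ} (hghatmeas : Measurable ghat) (hghatrange : ∀ u, ghat u ∈ Set.Icc (0:ℝ) 1)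
    (hghat : ∀ u ∈ Set.Icc 0 L,
      (∫ w in (0:ℝ)..u, ghat w) = lcMaj L (fun t => ∫ w in (0:ℝ)..t, g w) u)
    {φ : ℝ → ℝ} (hφmeas : Measurable φ) (hφrange : ∀ u, φ u ∈ Set.Icc (0:ℝ) 1)
    (hφdom : ∀ u ∈ Set.Icc 0 L, (∫ w in (0:ℝ)..u, g w) ≤ ∫ w in (0:ℝ)..u, φ w)
    (hFM : ∀ u ∈ Set.Icc 0 L, (∫ w in (0:ℝ)..u, g w) ≤ ∫ w in (0:ℝ)..L, g w) (c : ℝ) :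
    (∫ u in (0:ℝ)..L, max (ghat u - c) 0) ≤ ∫ u in (0:ℝ)..L, max (φ u - c) 0 := by
  set F : ℝ → ℝ := fun t => ∫ w in (0:ℝ)..t, g w with hF
  have hgi := aux_ii01 hgmeas hgrange
  have hhi := aux_ii01 hghatmeas hghatrange
  have hφi := aux_ii01 hφmeas hφrange
  have hmaxi : ∀ {f : ℝ → ℝ}, Measurable f → (∀ u, f u ∈ Icc (0:ℝ) 1) → ∀ a b,
      IntervalIntegrable (fun u => max (f u - c) 0) volume a b := by
    intro f hf hr a b
    refine aux_ii ((hf.sub_const c).max measurable_const) (1 + |c|) ?_ a b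
    intro u
    have h1 := (hr u).1
    have h2 := (hr u).2
    have h3 := abs_le.1 (le_refl |c|)
    rw [abs_of_nonneg (le_max_right _ _)]
    exact max_le (by linarith) (by linarith [abs_nonneg c])
  set G : ℝ → ℝ := fun t => ∫ w in (0:ℝ)..t, ghat w with hG
  have hGc : Continuous G := intervalIntegral.continuous_primitive hhi 0
  have hFc : Continuous F := intervalIntegral.continuous_primitive hgi 0
  have hconc : ConcaveOn ℝ (Icc 0 L) (fun u => G u - c * u) := by
    have h1 : ConcaveOn ℝ (Icc 0 L) G := (aux_lc_concave hFM).congr (fun u hu => (hghat u hu).symm)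
    refine ⟨convex_Icc _ _, ?_⟩
    intro x hx y hy a b ha hb hab
    have := h1.2 hx hy ha hb hab
    simp only [smul_eq_mul] at this ⊢
    linarith
  have hne : (Icc 0 L).Nonempty := ⟨0, by simp [hL.le]⟩
  obtain ⟨s, hs, hsmax⟩ := isCompact_Icc.exists_isMaxOn hne
    (f := fun u => G u - c * u) (by fun_prop)
  obtain ⟨v, hv, hvmax⟩ := isCompact_Icc.exists_isMaxOn hne
    (f := fun u => F u - c * u) (by fun_prop)
  have hsmax' : ∀ u ∈ Icc 0 L, G u - c * u ≤ G s - c * s := fun u hu => hsmax hu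
  have hvmax' : ∀ u ∈ Icc 0 L, F u - c * u ≤ F v - c * v := fun u hu => hvmax hu
  have hmono := aux_conc_mono hconc hs hsmax'
  have hanti := aux_conc_anti hconc hs hsmax'
  have hder : ∀ᵐ x, x ∈ uIcc 0 L → HasDerivAt (fun u => G u - c * u) (ghat x - c) x := by
    filter_upwards [(hhi 0 L).ae_hasDerivAt_integral] with x hx hxm
    have h2 : HasDerivAt (fun u : ℝ => c * u) c x := by
      simpa using (hasDerivAt_id x).const_mul c
    exact (hx hxm 0 left_mem_uIcc).sub h2
  have e1 : ∫ u in (0:ℝ)..s, max (ghat u - c) 0 = ∫ u in (0:ℝ)..s, (ghat u - c) := by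
    refine intervalIntegral.integral_congr_ae ?_
    have hs' : ∀ᵐ x : ℝ, x ≠ s := by simp [ae_iff, measure_singleton]
    filter_upwards [hder, hs'] with x hx hxs hxm
    rw [uIoc_of_le hs.1] at hxm
    have hlt : x < s := lt_of_le_of_ne hxm.2 hxs
    have hd := hx (by rw [uIcc_of_le hL.le]; exact ⟨hxm.1.le, hxm.2.trans hs.2⟩)
    have hn := hmono.derivWithin_nonneg (x := x)
    rw [derivWithin_of_mem_nhds (Icc_mem_nhds hxm.1 hlt), hd.deriv] at hn
    exact max_eq_left hn
  have e2 : ∫ u in s..L, max (ghat u - c) 0 = ∫ u in s..L, (0:ℝ) := by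
    refine intervalIntegral.integral_congr_ae ?_
    have hs' : ∀ᵐ x : ℝ, x ≠ L := by simp [ae_iff, measure_singleton]
    filter_upwards [hder, hs'] with x hx hxs hxm
    rw [uIoc_of_le hs.2] at hxm
    have hlt : x < L := lt_of_le_of_ne hxm.2 hxs
    have hd := hx (by rw [uIcc_of_le hL.le]; exact ⟨hs.1.trans hxm.1.le, hxm.2⟩)
    have hn := hanti.derivWithin_nonpos (x := x)
    rw [derivWithin_of_mem_nhds (Icc_mem_nhds hxm.1 hlt), hd.deriv] at hn
    exact max_eq_right hn
  have e3 : ∫ u in (0:ℝ)..L, max (ghat u - c) 0 = G s - c * s := by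
    rw [← intervalIntegral.integral_add_adjacent_intervals (hmaxi hghatmeas hghatrange 0 s)
      (hmaxi hghatmeas hghatrange s L), e1, e2,
      intervalIntegral.integral_sub (hhi _ _) (by simp)]
    simp [hG, mul_comm]
  have e4 : G s ≤ c * s + (F v - c * v) := by
    have : G s = lcMaj L F s := hghat s hs
    rw [this]
    refine aux_lc_le (G := fun u => c * u + (F v - c * v)) hs ?_ ?_
    · refine ⟨convex_Icc _ _, ?_⟩
      intro x hx y hy a b ha hb hab
      simp only [smul_eq_mul]
      have : (a + b) * (F v - c * v) = F v - c * v := by rw [hab, one_mul]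
      linarith
    · intro x hx
      have := hvmax' x hx
      linarith
  have e5 : F v - c * v ≤ ∫ u in (0:ℝ)..v, (φ u - c) := by
    rw [intervalIntegral.integral_sub (hφi _ _) (by simp)]
    have := hφdom v hv
    simp only [intervalIntegral.integral_const, smul_eq_mul]
    simp only [hF]
    linarith
  have e6 : ∫ u in (0:ℝ)..v, (φ u - c) ≤ ∫ u in (0:ℝ)..v, max (φ u - c) 0 :=
    intervalIntegral.integral_mono_on hv.1 ((hφi _ _).sub (by simp)) (hmaxi hφmeas hφrange _ _)
      (fun x _ => le_max_left _ _)
  have e7 : ∫ u in (0:ℝ)..v, max (φ u - c) 0 ≤ ∫ u in (0:ℝ)..L, max (φ u - c) 0 :=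
    intervalIntegral.integral_mono_interval le_rfl hv.1 hv.2
      (Filter.Eventually.of_forall fun x => le_max_right _ _) (hmaxi hφmeas hφrange _ _)
  linarith

/-- kernel -/
def auxK (m x c : ℝ) : ℝ :=
  if c ≤ m then max (c - x) 0 / (c * (1 - c)) else max (x - c) 0 / (c * (1 - c))

lemma aux_ftc {m : ℝ} (hm : m ∈ Ioo (0:ℝ) 1) {x : ℝ} (hx : x ∈ Icc (0:ℝ) 1) :
    IntervalIntegrable (fun c => x / c - (1 - x) / (1 - c)) volume m x ∧
    ∫ c in m..x, (x / c - (1 - x) / (1 - c)) = hFun m x := by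
  have hmem : ∀ c ∈ uIcc m x, (c ≠ 0 ∨ x = 0) ∧ (1 - c ≠ 0 ∨ 1 - x = 0) := by
    intro c hc
    obtain ⟨h1, h2⟩ := hm
    obtain ⟨h3, h4⟩ := hx
    rw [mem_uIcc] at hc
    constructor
    · by_cases h : x = 0
      · exact Or.inr h
      · left
        have : 0 < x := lt_of_le_of_ne h3 (Ne.symm h)
        have : 0 < c := by rcases hc with hc | hc <;> linarith [hc.1]
        exact this.ne'
    · by_cases h : 1 - x = 0
      · exact Or.inr h
      · left
        have : 0 < 1 - x := lt_of_le_of_ne (by linarith) (Ne.symm h)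
        have : 0 < 1 - c := by rcases hc with hc | hc <;> linarith [hc.2]
        exact this.ne'
  have hint : IntervalIntegrable (fun c => x / c - (1 - x) / (1 - c)) volume m x := by
    apply ContinuousOn.intervalIntegrable
    have c1 : ContinuousOn (fun c : ℝ => x / c) (uIcc m x) := by
      by_cases h : x = 0
      · have : (fun c : ℝ => x / c) = fun _ => 0 := by ext c; simp [h]
        rw [this]; exact continuousOn_const
      · exact continuousOn_const.div continuousOn_id
          (fun c hc => (hmem c hc).1.resolve_right h)
    have c2 : ContinuousOn (fun c : ℝ => (1 - x) / (1 - c)) (uIcc m x) := by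
      by_cases h : 1 - x = 0
      · have : (fun c : ℝ => (1 - x) / (1 - c)) = fun _ => 0 := by ext c; simp [h]
        rw [this]; exact continuousOn_const
      · exact continuousOn_const.div (by fun_prop)
          (fun c hc => (hmem c hc).2.resolve_right h)
    exact c1.sub c2
  refine ⟨hint, ?_⟩
  rw [intervalIntegral.integral_eq_sub_of_hasDerivAt
    (f := fun c => x * Real.log c + (1 - x) * Real.log (1 - c)) ?_ hint]
  · rw [aux_h_eq hm, Real.binEntropy, Real.log_inv, Real.log_inv]
    ring
  · intro c hc
    have d1 : HasDerivAt (fun c => x * Real.log c) (x / c) c := by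
      by_cases h : x = 0
      · simp only [h, zero_div, zero_mul]; exact hasDerivAt_const _ _
      · exact (Real.hasDerivAt_log ((hmem c hc).1.resolve_right h)).const_mul x
    have d2 : HasDerivAt (fun c => (1 - x) * Real.log (1 - c)) (-((1 - x) / (1 - c))) c := by
      by_cases h : 1 - x = 0
      · simp only [h, zero_div, zero_mul, neg_zero]; exact hasDerivAt_const _ _
      · have e : HasDerivAt (fun c : ℝ => 1 - c) (-1) c := by
          simpa using (hasDerivAt_id c).const_sub 1
        have e' := (e.log ((hmem c hc).2.resolve_right h)).const_mul (1 - x)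
        have e2 : (1 - x) * (-1 / (1 - c)) = -((1 - x) / (1 - c)) := by ring
        rw [← e2]
        exact e'
    rw [sub_eq_add_neg]
    exact d1.add d2

lemma aux_frac {x c : ℝ} (hc : c ∈ Ioo (0:ℝ) 1) :
    (x - c) / (c * (1 - c)) = x / c - (1 - x) / (1 - c) := by
  have h0 : c ≠ 0 := hc.1.ne'
  have h1 : 1 - c ≠ 0 := by have := hc.2; intro h; linarith
  field_simp
  ring

lemma aux_K_int {m : ℝ} (hm : m ∈ Ioo (0:ℝ) 1) {x : ℝ} (hx : x ∈ Icc (0:ℝ) 1) :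
    ∫⁻ c in Ioo (0:ℝ) 1, ENNReal.ofReal (auxK m x c) = ENNReal.ofReal (hFun m x) ∧
      0 ≤ hFun m x := by
  obtain ⟨hi, hv⟩ := aux_ftc hm hx
  rcases le_total m x with hmx | hmx
  · rw [intervalIntegral.integral_of_le hmx, integral_Ioc_eq_integral_Ioo] at hv
    rw [intervalIntegrable_iff_integrableOn_Ioo_of_le hmx] at hi
    have hnn : ∀ c ∈ Ioo m x, 0 ≤ x / c - (1 - x) / (1 - c) := by
      intro c hc
      have hc' : c ∈ Ioo (0:ℝ) 1 := ⟨hm.1.trans hc.1, hc.2.trans_le hx.2⟩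
      rw [← aux_frac hc']
      exact div_nonneg (by linarith [hc.2]) (mul_nonneg hc'.1.le (by linarith [hc'.2]))
    refine ⟨?_, hv ▸ setIntegral_nonneg measurableSet_Ioo hnn⟩
    rw [← hv, ofReal_integral_eq_lintegral_ofReal hi
      ((ae_restrict_iff' measurableSet_Ioo).2 (Filter.Eventually.of_forall hnn)),
      ← lintegral_indicator measurableSet_Ioo, ← lintegral_indicator measurableSet_Ioo]
    congr 1
    ext c
    by_cases h1 : c ∈ Ioo m x
    · have hc' : c ∈ Ioo (0:ℝ) 1 := ⟨hm.1.trans h1.1, h1.2.trans_le hx.2⟩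
      rw [indicator_of_mem h1, indicator_of_mem hc', ← aux_frac hc', auxK,
        if_neg (not_le.2 h1.1), max_eq_left (by linarith [h1.2])]
    · rw [indicator_of_notMem h1]
      by_cases hc' : c ∈ Ioo (0:ℝ) 1
      · rw [indicator_of_mem hc', auxK]
        split_ifs with h
        · rw [max_eq_right (by linarith)]; simp
        · have : x ≤ c := by
            by_contra h2
            exact h1 ⟨not_le.1 h, not_le.1 h2⟩
          rw [max_eq_right (by linarith)]; simp
      · rw [indicator_of_notMem hc']
  · rw [intervalIntegral.integral_symm, ← intervalIntegral.integral_neg,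
      intervalIntegral.integral_of_le hmx, integral_Ioc_eq_integral_Ioo] at hv
    replace hi : IntervalIntegrable (fun c => -(x / c - (1 - x) / (1 - c))) volume x m :=
      hi.symm.neg
    rw [intervalIntegrable_iff_integrableOn_Ioo_of_le hmx] at hi
    have hnn : ∀ c ∈ Ioo x m, 0 ≤ -(x / c - (1 - x) / (1 - c)) := by
      intro c hc
      have hc' : c ∈ Ioo (0:ℝ) 1 := ⟨hx.1.trans_lt hc.1, hc.2.trans hm.2⟩
      rw [← aux_frac hc', ← neg_div]
      exact div_nonneg (by linarith [hc.1]) (mul_nonneg hc'.1.le (by linarith [hc'.2]))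
    refine ⟨?_, hv ▸ setIntegral_nonneg measurableSet_Ioo hnn⟩
    rw [← hv, ofReal_integral_eq_lintegral_ofReal hi
      ((ae_restrict_iff' measurableSet_Ioo).2 (Filter.Eventually.of_forall hnn)),
      ← lintegral_indicator measurableSet_Ioo, ← lintegral_indicator measurableSet_Ioo]
    refine lintegral_congr_ae ?_
    have hs' : ∀ᵐ c : ℝ, c ≠ m := by simp [ae_iff, measure_singleton]
    filter_upwards [hs'] with c hcm
    by_cases h1 : c ∈ Ioo x m
    · have hc' : c ∈ Ioo (0:ℝ) 1 := ⟨hx.1.trans_lt h1.1, h1.2.trans hm.2⟩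
      rw [indicator_of_mem h1, indicator_of_mem hc', ← aux_frac hc', auxK,
        if_pos h1.2.le, max_eq_left (by linarith [h1.1]), ← neg_div, neg_sub]
    · rw [indicator_of_notMem h1]
      by_cases hc' : c ∈ Ioo (0:ℝ) 1
      · rw [indicator_of_mem hc', auxK]
        split_ifs with h
        · have : c ≤ x := by
            by_contra h2
            exact h1 ⟨not_le.1 h2, lt_of_le_of_ne h hcm⟩
          rw [max_eq_right (by linarith)]; simp
        · rw [max_eq_right (by linarith)]; simp
      · rw [indicator_of_notMem hc']

lemma aux_K_meas (m : ℝ) : Measurable (fun p : ℝ × ℝ => auxK m p.1 p.2) := by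
  unfold auxK
  refine Measurable.ite (measurableSet_le measurable_snd measurable_const) ?_ ?_ <;> fun_prop

lemma aux_h_ii {m : ℝ} (hm : m ∈ Ioo (0:ℝ) 1) {f : ℝ → ℝ} (hf : Measurable f)
    (hr : ∀ u, f u ∈ Icc (0:ℝ) 1) (a b : ℝ) :
    IntervalIntegrable (fun u => hFun m (f u)) volume a b := by
  obtain ⟨C, hC⟩ := isCompact_Icc.exists_bound_of_continuousOn
    (s := Icc (0:ℝ) 1) (aux_h_cont hm).continuousOn
  exact aux_ii ((aux_h_cont hm).measurable.comp hf) C (fun u => hC _ (hr u)) a b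

/-- Minimality of `ghat`. -/
lemma aux_min {m L : ℝ} (hm : m ∈ Ioo (0:ℝ) 1) (hL : 0 < L)
    {f φ : ℝ → ℝ} (hf : Measurable f) (hfr : ∀ u, f u ∈ Icc (0:ℝ) 1)
    (hφ : Measurable φ) (hφr : ∀ u, φ u ∈ Icc (0:ℝ) 1)
    (hmass : ∫ u in (0:ℝ)..L, f u = ∫ u in (0:ℝ)..L, φ u)
    (hpos : ∀ c, (∫ u in (0:ℝ)..L, max (f u - c) 0) ≤ ∫ u in (0:ℝ)..L, max (φ u - c) 0) :
    ∫ u in (0:ℝ)..L, hFun m (f u) ≤ ∫ u in (0:ℝ)..L, hFun m (φ u) := by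
  have hrep : ∀ {q : ℝ → ℝ}, Measurable q → (∀ u, q u ∈ Icc (0:ℝ) 1) →
      ENNReal.ofReal (∫ u in (0:ℝ)..L, hFun m (q u)) =
        ∫⁻ c in Ioo (0:ℝ) 1, ∫⁻ u in Ioc 0 L, ENNReal.ofReal (auxK m (q u) c) := by
    intro q hq hqr
    have hi := aux_h_ii hm hq hqr 0 L
    rw [intervalIntegrable_iff_integrableOn_Ioc_of_le hL.le] at hi
    rw [intervalIntegral.integral_of_le hL.le, ofReal_integral_eq_lintegral_ofReal hi
      (Filter.Eventually.of_forall fun u => (aux_K_int hm (hqr u)).2)]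
    simp_rw [← (aux_K_int hm (hqr _)).1]
    apply lintegral_lintegral_swap
    apply Measurable.aemeasurable
    apply Measurable.ennreal_ofReal
    exact (aux_K_meas m).comp ((hq.comp measurable_fst).prodMk measurable_snd)
  have hnn : 0 ≤ ∫ u in (0:ℝ)..L, hFun m (φ u) :=
    intervalIntegral.integral_nonneg hL.le (fun u _ => (aux_K_int hm (hφr u)).2)
  rw [← ENNReal.ofReal_le_ofReal_iff hnn, hrep hf hfr, hrep hφ hφr]
  refine setLIntegral_mono' measurableSet_Ioo ?_
  intro c hc
  have hcc : 0 < c * (1 - c) := mul_pos hc.1 (by linarith [hc.2])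
  -- integrability
  have hmaxi : ∀ {q : ℝ → ℝ}, Measurable q → (∀ u, q u ∈ Icc (0:ℝ) 1) →
      IntervalIntegrable (fun u => max (q u - c) 0) volume 0 L := by
    intro q hq hr
    refine aux_ii ((hq.sub_const c).max measurable_const) 1 ?_ _ _
    intro u
    rw [abs_of_nonneg (le_max_right _ _)]
    exact max_le (by linarith [(hr u).2, hc.1]) (by norm_num)
  have hKeq : ∀ q : ℝ → ℝ, (fun u => auxK m (q u) c) = if c ≤ m then
      (fun u => (max (q u - c) 0 - (q u - c)) * (c * (1 - c))⁻¹)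
      else (fun u => max (q u - c) 0 * (c * (1 - c))⁻¹) := by
    intro q
    split_ifs with h
    · ext u
      rw [auxK, if_pos h, div_eq_mul_inv]
      congr 1
      rcases le_total c (q u) with h' | h'
      · rw [max_eq_right (by linarith), max_eq_left (by linarith)]; ring
      · rw [max_eq_left (by linarith), max_eq_right (by linarith)]; ring
    · ext u
      rw [auxK, if_neg h, div_eq_mul_inv]
  have hsub : ∀ {q : ℝ → ℝ}, Measurable q → (∀ u, q u ∈ Icc (0:ℝ) 1) →
      IntervalIntegrable (fun u => q u - c) volume 0 L := fun hq hr =>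
    (aux_ii01 hq hr 0 L).sub (by simp)
  have hKi : ∀ {q : ℝ → ℝ}, Measurable q → (∀ u, q u ∈ Icc (0:ℝ) 1) →
      IntervalIntegrable (fun u => auxK m (q u) c) volume 0 L := by
    intro q hq hr
    rw [hKeq]
    split_ifs with h
    · exact ((hmaxi hq hr).sub (hsub hq hr)).mul_const _
    · exact (hmaxi hq hr).mul_const _
  have hlin : ∀ {q : ℝ → ℝ}, Measurable q → (∀ u, q u ∈ Icc (0:ℝ) 1) →
      ∫⁻ u in Ioc 0 L, ENNReal.ofReal (auxK m (q u) c) =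
        ENNReal.ofReal (∫ u in (0:ℝ)..L, auxK m (q u) c) := by
    intro q hq hr
    have hi := hKi hq hr
    rw [intervalIntegrable_iff_integrableOn_Ioc_of_le hL.le] at hi
    rw [intervalIntegral.integral_of_le hL.le, ofReal_integral_eq_lintegral_ofReal hi]
    refine Filter.Eventually.of_forall fun u => ?_
    show 0 ≤ auxK m (q u) c
    unfold auxK
    split_ifs <;> exact div_nonneg (le_max_right _ _) hcc.le
  rw [hlin hf hfr, hlin hφ hφr]
  refine ENNReal.ofReal_le_ofReal ?_
  rw [hKeq, hKeq]
  have hinv : 0 ≤ (c * (1 - c))⁻¹ := inv_nonneg.2 hcc.le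
  split_ifs with h
  · rw [intervalIntegral.integral_mul_const, intervalIntegral.integral_mul_const]
    refine mul_le_mul_of_nonneg_right ?_ hinv
    rw [intervalIntegral.integral_sub (hmaxi hf hfr) (hsub hf hfr),
      intervalIntegral.integral_sub (hmaxi hφ hφr) (hsub hφ hφr),
      intervalIntegral.integral_sub (aux_ii01 hf hfr 0 L) (by simp),
      intervalIntegral.integral_sub (aux_ii01 hφ hφr 0 L) (by simp), hmass]
    linarith [hpos c]
  · rw [intervalIntegral.integral_mul_const, intervalIntegral.integral_mul_const]
    exact mul_le_mul_of_nonneg_right (hpos c) hinv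

/-- uniqueness of the minimizer in the variational problem of STATEMENT 14:
any admissible `φ` with `∫_0^L h_m(φ) = ∫_0^L h_m(ĝ)` coincides with `ĝ` almost
everywhere on `[0,L]`. -/
theorem stmt15 (m L : ℝ) (hm : m ∈ Set.Ioo (0:ℝ) 1) (hL : 0 < L)
    (g : ℝ → ℝ) (hgmeas : Measurable g) (hgrange : ∀ u, g u ∈ Set.Icc (0:ℝ) 1)
    (ghat : ℝ → ℝ) (hghatmeas : Measurable ghat) (hghatrange : ∀ u, ghat u ∈ Set.Icc (0:ℝ) 1)
    (hghat : ∀ u ∈ Set.Icc 0 L,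
      (∫ w in (0:ℝ)..u, ghat w) = lcMaj L (fun t => ∫ w in (0:ℝ)..t, g w) u)
    (φ : ℝ → ℝ) (hφmeas : Measurable φ) (hφrange : ∀ u, φ u ∈ Set.Icc (0:ℝ) 1)
    (hφdom : ∀ u ∈ Set.Icc 0 L, (∫ w in (0:ℝ)..u, g w) ≤ ∫ w in (0:ℝ)..u, φ w)
    (hφmass : (∫ w in (0:ℝ)..L, φ w) = ∫ w in (0:ℝ)..L, g w)
    (hφmin : (∫ u in (0:ℝ)..L, hFun m (φ u)) = ∫ u in (0:ℝ)..L, hFun m (ghat u)) :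
    ∀ᵐ u ∂((volume : Measure ℝ).restrict (Set.Icc 0 L)), φ u = ghat u := by
  have hgi := aux_ii01 hgmeas hgrange
  have hhi := aux_ii01 hghatmeas hghatrange
  have hφi := aux_ii01 hφmeas hφrange
  have hFM : ∀ u ∈ Set.Icc 0 L, (∫ w in (0:ℝ)..u, g w) ≤ ∫ w in (0:ℝ)..L, g w := fun u hu =>
    intervalIntegral.integral_mono_interval le_rfl hu.1 hu.2
      (Filter.Eventually.of_forall fun x => (hgrange x).1) (hgi _ _)
  have hLm : L ∈ Icc 0 L := ⟨hL.le, le_rfl⟩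
  have hmassG : (∫ w in (0:ℝ)..L, ghat w) = ∫ w in (0:ℝ)..L, g w := by
    rw [hghat L hLm]
    refine le_antisymm ?_ (aux_lc_ge (F := fun t => ∫ w in (0:ℝ)..t, g w) hLm hFM)
    exact aux_lc_le (F := fun t => ∫ w in (0:ℝ)..t, g w)
      (G := fun _ => ∫ w in (0:ℝ)..L, g w) hLm (concaveOn_const _ (convex_Icc _ _)) hFM
  have hGdom : ∀ u ∈ Set.Icc 0 L, (∫ w in (0:ℝ)..u, g w) ≤ ∫ w in (0:ℝ)..u, ghat w := by
    intro u hu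
    rw [hghat u hu]
    exact aux_lc_ge (F := fun t => ∫ w in (0:ℝ)..t, g w) hu hFM
  set ψ : ℝ → ℝ := fun u => (φ u + ghat u) / 2 with hψ
  have hψm : Measurable ψ := (hφmeas.add hghatmeas).div_const 2
  have hψr : ∀ u, ψ u ∈ Icc (0:ℝ) 1 := fun u =>
    ⟨by have := (hφrange u).1; have := (hghatrange u).1; simp only [hψ]; linarith,
     by have := (hφrange u).2; have := (hghatrange u).2; simp only [hψ]; linarith⟩
  have hψint : ∀ u, ∫ w in (0:ℝ)..u, ψ w
      = ((∫ w in (0:ℝ)..u, φ w) + ∫ w in (0:ℝ)..u, ghat w) / 2 := by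
    intro u
    simp only [hψ]
    rw [intervalIntegral.integral_div, intervalIntegral.integral_add (hφi _ _) (hhi _ _)]
  have hψdom : ∀ u ∈ Set.Icc 0 L, (∫ w in (0:ℝ)..u, g w) ≤ ∫ w in (0:ℝ)..u, ψ w := by
    intro u hu
    rw [hψint]
    linarith [hφdom u hu, hGdom u hu]
  have hmin := aux_min hm hL hghatmeas hghatrange hψm hψr
    (by rw [hψint, hφmass, hmassG]; ring)
    (aux_pos hL hgmeas hgrange hghatmeas hghatrange hghat hψm hψr hψdom hFM)
  have i1 := aux_h_ii hm hφmeas hφrange 0 L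
  have i2 := aux_h_ii hm hghatmeas hghatrange 0 L
  have i3 := aux_h_ii hm hψm hψr 0 L
  have i4 := ((i1.add i2).div_const 2).sub i3
  have hdnn : ∀ u, 0 ≤ (hFun m (φ u) + hFun m (ghat u)) / 2 - hFun m (ψ u) := by
    intro u
    by_cases h : φ u = ghat u
    · simp [hψ, h]
    · have := aux_h_mid hm (hφrange u) (hghatrange u) h
      simp only [hψ]; linarith
  have hd0 : ∫ u in (0:ℝ)..L, ((hFun m (φ u) + hFun m (ghat u)) / 2 - hFun m (ψ u)) = 0 := by
    refine le_antisymm ?_ (intervalIntegral.integral_nonneg hL.le fun u _ => hdnn u)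
    rw [intervalIntegral.integral_sub ((i1.add i2).div_const 2) i3,
      intervalIntegral.integral_div, intervalIntegral.integral_add i1 i2, hφmin]
    linarith
  rw [intervalIntegral.integral_eq_zero_iff_of_le_of_nonneg_ae hL.le
    (Filter.Eventually.of_forall hdnn) i4] at hd0
  rw [← restrict_Ioc_eq_restrict_Icc]
  filter_upwards [hd0] with u hu
  by_contra h
  have := aux_h_mid hm (hφrange u) (hghatrange u) h
  simp only [Pi.zero_apply, hψ] at hu
  linarith

end
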